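/- Let r be a weak stubborn set (satisfying D1', D2w, V, I, L) on an LSTS and let π = s0 -a1→ s1 -a2→ … -an→ sn be a finite path of length n > 0 such that ai ∉ r(s0) for every i. Then there exist an action ak, a state s'n with sn -ak→ s'n, and a path π' = s0 -ak→ s'0 -a1→ … -an→ s'n, such that π and π' are stutter equivalent (and the first transition of π' is in the reduced LSTS when s0 is a state of the reduced LSTS). -/

import Mathlib

open scoped Classical

/-- The subsequence of an `Option`-valued sequence consisting of the values at the
indices satisfying `P`, in increasing order (`none` past the end when only finitely
many indices satisfy `P`). -/
noncomputable def subseq {α : Type*} (g : ℕ → Option α) (P : ℕ → Prop) : ℕ → Option α :=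
  fun k => if {i | P i}.Infinite ∨ k < {i | P i}.ncard then g (Nat.nth P k) else none

/-- The no-stutter trace of a sequence of labels (`none` marking positions past the end
of a finite sequence): the subsequence of those values at indices `i` such that `i = 0`
or the value differs from the one at `i - 1`. -/
noncomputable def nsTrace {α : Type*} (g : ℕ → Option α) : ℕ → Option α :=
  subseq g fun i => (g i).isSome ∧ (i = 0 ∨ g i ≠ g (i - 1))

/-- A (finite or infinite) path of a transition relation `Tr`.  `len` is the number of
transitions (`⊤` for an infinite path); the values of `states` and `acts` beyond the
length are irrelevant junk. -/
structure TPath {S : Type*} {A : Type*} (Tr : S → A → S → Prop) where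
  states : ℕ → S
  acts : ℕ → A
  len : ℕ∞
  valid : ∀ i : ℕ, (i : ℕ∞) < len → Tr (states i) (acts i) (states (i + 1))

/-- The sequence of state labels along a path (`none` beyond the end). -/
noncomputable def TPath.labelSeq {S A l : Type*}
    {Tr : S → A → S → Prop} (p : TPath Tr) (L : S → Set l) : ℕ → Option (Set l) :=
  fun i => if (i : ℕ∞) ≤ p.len then some (L (p.states i)) else none

/-- The sequence of actions along a path (`none` beyond the end). -/
noncomputable def TPath.actSeq {S A : Type*}
    {Tr : S → A → S → Prop} (p : TPath Tr) : ℕ → Option A :=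
  fun i => if (i : ℕ∞) < p.len then some (p.acts i) else none

/-- Stutter equivalence of two paths with respect to labellings `L₁`, `L₂`:
both are finite or both are infinite, and they have the same no-stutter trace. -/
def StutterEquiv {S₁ A₁ S₂ A₂ l : Type*}
    {Tr₁ : S₁ → A₁ → S₁ → Prop} {Tr₂ : S₂ → A₂ → S₂ → Prop}
    (L₁ : S₁ → Set l) (L₂ : S₂ → Set l) (p : TPath Tr₁) (q : TPath Tr₂) : Prop :=
  (p.len = ⊤ ↔ q.len = ⊤) ∧ nsTrace (p.labelSeq L₁) = nsTrace (q.labelSeq L₂)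

/-- Weak equivalence of two paths with respect to a set `I` of invisible actions:
both are finite or both are infinite, and the projections of their action sequences
onto the visible actions (those not in `I`) are equal. -/
def WeakEquiv {S₁ S₂ A : Type*}
    {Tr₁ : S₁ → A → S₁ → Prop} {Tr₂ : S₂ → A → S₂ → Prop}
    (I : Set A) (p : TPath Tr₁) (q : TPath Tr₂) : Prop :=
  (p.len = ⊤ ↔ q.len = ⊤) ∧
    subseq p.actSeq (fun i => (i : ℕ∞) < p.len ∧ p.acts i ∉ I) =
      subseq q.actSeq (fun i => (i : ℕ∞) < q.len ∧ q.acts i ∉ I)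

/-- A finite run of length `n` along `Tr`: `σ 0 -α 0→ σ 1 -α 1→ ⋯ -α (n-1)→ σ n`. -/
def FinRun {S A : Type*} (Tr : S → A → S → Prop) (n : ℕ) (σ : ℕ → S) (α : ℕ → A) : Prop :=
  ∀ i < n, Tr (σ i) (α i) (σ (i + 1))

/-- `a` is a key action in `s` w.r.t. the reduction function `r`: for all
`a₁, …, aₙ ∉ r s` and paths `s -a₁…aₙ→ s'`, the action `a` is enabled in `s'`. -/
def KeyAction {S A : Type*} (Tr : S → A → S → Prop) (r : S → Set A) (s : S) (a : A) : Prop :=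
  ∀ (n : ℕ) (σ : ℕ → S) (α : ℕ → A), σ 0 = s → FinRun Tr n σ α →
    (∀ i < n, α i ∉ r s) → ∃ t, Tr (σ n) a t

/-- Condition D0: if some action is enabled in `s`, then `r s` contains an enabled action. -/
def CondD0 {S A : Type*} (Tr : S → A → S → Prop) (r : S → Set A) (s : S) : Prop :=
  (∃ a t, Tr s a t) → ∃ a ∈ r s, ∃ t, Tr s a t

/-- Condition D1. -/
def CondD1 {S A : Type*} (Tr : S → A → S → Prop) (r : S → Set A) (s : S) : Prop :=
  ∀ a ∈ r s, ∀ (n : ℕ) (σ : ℕ → S) (α : ℕ → A) (sn' : S),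
    σ 0 = s → FinRun Tr n σ α → (∀ i < n, α i ∉ r s) → Tr (σ n) a sn' →
    ∃ σ' : ℕ → S, Tr s a (σ' 0) ∧ FinRun Tr n σ' α ∧ σ' n = sn'

/-- Condition D1' (strengthened D1): additionally, if `a` is invisible then
`sᵢ -a→ s'ᵢ` for every `1 ≤ i < n`. -/
def CondD1' {S A : Type*} (Tr : S → A → S → Prop) (I : Set A) (r : S → Set A) (s : S) : Prop :=
  ∀ a ∈ r s, ∀ (n : ℕ) (σ : ℕ → S) (α : ℕ → A) (sn' : S),
    σ 0 = s → FinRun Tr n σ α → (∀ i < n, α i ∉ r s) → Tr (σ n) a sn' →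
    ∃ σ' : ℕ → S, Tr s a (σ' 0) ∧ FinRun Tr n σ' α ∧ σ' n = sn' ∧
      (a ∈ I → ∀ i, 1 ≤ i → i < n → Tr (σ i) a (σ' i))

/-- Condition D2: every enabled action of `r s` is a key action in `s`. -/
def CondD2 {S A : Type*} (Tr : S → A → S → Prop) (r : S → Set A) (s : S) : Prop :=
  ∀ a ∈ r s, (∃ t, Tr s a t) → KeyAction Tr r s a

/-- Condition D2w: if some action is enabled in `s`, then `r s` contains a key action. -/
def CondD2w {S A : Type*} (Tr : S → A → S → Prop) (r : S → Set A) (s : S) : Prop :=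
  (∃ a t, Tr s a t) → ∃ a ∈ r s, KeyAction Tr r s a

/-- Condition V: if `r s` contains an enabled visible action, it contains all visible
actions. -/
def CondV {S A : Type*} (Tr : S → A → S → Prop) (I : Set A) (r : S → Set A) (s : S) : Prop :=
  (∃ a ∈ r s, a ∉ I ∧ ∃ t, Tr s a t) → ∀ a, a ∉ I → a ∈ r s

/-- Condition I: if an invisible action is enabled in `s`, then `r s` contains an
invisible key action. -/
def CondI {S A : Type*} (Tr : S → A → S → Prop) (I : Set A) (r : S → Set A) (s : S) : Prop :=
  (∃ a ∈ I, ∃ t, Tr s a t) → ∃ a ∈ r s, a ∈ I ∧ KeyAction Tr r s a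

/-- The states of the reduced LSTS: the smallest set of states containing the initial
state `s0` and closed under transitions labelled with actions of the stubborn set. -/
inductive RedReach {S A : Type*} (Tr : S → A → S → Prop) (r : S → Set A) (s0 : S) : S → Prop
  | refl : RedReach Tr r s0 s0
  | step {s a t} : RedReach Tr r s0 s → a ∈ r s → Tr s a t → RedReach Tr r s0 t

/-- The transition relation of the reduced LSTS. -/
def RedTr {S A : Type*} (Tr : S → A → S → Prop) (r : S → Set A) (s0 : S) :
    S → A → S → Prop :=
  fun s a t => RedReach Tr r s0 s ∧ a ∈ r s ∧ Tr s a t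

/-- Condition L: for every visible action `a`, every cycle in the reduced LSTS
contains a state `s` with `a ∈ r s`. -/
def CondL {S A : Type*} (Tr : S → A → S → Prop) (I : Set A) (r : S → Set A) (s0 : S) : Prop :=
  ∀ a ∉ I, ∀ (n : ℕ) (σ : ℕ → S) (α : ℕ → A), 0 < n →
    FinRun (RedTr Tr r s0) n σ α → σ n = σ 0 → ∃ i < n, a ∈ r (σ i)

/-- Condition C4: either `r s` consists of all actions, or `r s` contains precisely one
enabled action. -/
def CondC4 {S A : Type*} (Tr : S → A → S → Prop) (r : S → Set A) (s : S) : Prop :=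
  r s = Set.univ ∨ ∃! a, a ∈ r s ∧ ∃ t, Tr s a t

/-- `I` is a set of invisible actions w.r.t. the labelling `L`. -/
def InvisibleSet {S A l : Type*} (Tr : S → A → S → Prop) (L : S → Set l) (I : Set A) : Prop :=
  ∀ a ∈ I, ∀ s t, Tr s a t → L s = L t

/-- Reachability along `Tr`. -/
inductive Reach {S A : Type*} (Tr : S → A → S → Prop) (s0 : S) : S → Prop
  | refl : Reach Tr s0 s0
  | step {s a t} : Reach Tr s0 s → Tr s a t → Reach Tr s0 t

/-- Stutter-trace equivalence of two systems: for every initial path of the one there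
is a stutter equivalent initial path of the other, and vice versa. -/
def StutterTraceEquiv {S₁ A₁ S₂ A₂ l : Type*} (Tr₁ : S₁ → A₁ → S₁ → Prop) (i₁ : S₁)
    (L₁ : S₁ → Set l) (Tr₂ : S₂ → A₂ → S₂ → Prop) (i₂ : S₂) (L₂ : S₂ → Set l) : Prop :=
  (∀ p : TPath Tr₁, p.states 0 = i₁ →
      ∃ q : TPath Tr₂, q.states 0 = i₂ ∧ StutterEquiv L₁ L₂ p q) ∧
  (∀ q : TPath Tr₂, q.states 0 = i₂ →
      ∃ p : TPath Tr₁, p.states 0 = i₁ ∧ StutterEquiv L₁ L₂ p q)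

/-- Weak-trace equivalence of two systems with the same set `I` of invisible actions. -/
def WeakTraceEquiv {S₁ S₂ A : Type*} (Tr₁ : S₁ → A → S₁ → Prop) (i₁ : S₁)
    (Tr₂ : S₂ → A → S₂ → Prop) (i₂ : S₂) (I : Set A) : Prop :=
  (∀ p : TPath Tr₁, p.states 0 = i₁ → ∃ q : TPath Tr₂, q.states 0 = i₂ ∧ WeakEquiv I p q) ∧
  (∀ q : TPath Tr₂, q.states 0 = i₂ → ∃ p : TPath Tr₁, p.states 0 = i₁ ∧ WeakEquiv I p q)

/-- An LSTS is labelled consistently iff any two weakly equivalent paths starting in a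
common state are stutter equivalent. -/
def LabelledConsistently {S A l : Type*} (Tr : S → A → S → Prop) (L : S → Set l)
    (I : Set A) : Prop :=
  ∀ p q : TPath Tr, p.states 0 = q.states 0 → WeakEquiv I p q → StutterEquiv L L p q

/-- Label sequence of an explicitly given finite run with `n` transitions. -/
noncomputable def finLabelSeq {S l : Type*} (L : S → Set l) (n : ℕ) (σ : ℕ → S) :
    ℕ → Option (Set l) :=
  fun i => if i ≤ n then some (L (σ i)) else none

/-- Stutter equivalence of two explicitly given finite runs (with `n`, resp. `m`,
transitions); both are finite, so it only requires equality of no-stutter traces. -/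
def FinStutterEquiv {S l : Type*} (L : S → Set l) (n : ℕ) (σ : ℕ → S) (m : ℕ)
    (τ : ℕ → S) : Prop :=
  nsTrace (finLabelSeq L n σ) = nsTrace (finLabelSeq L m τ)

/-- Stutter equivalence of two explicitly given infinite runs; both are infinite, so it
only requires equality of no-stutter traces. -/
def InfStutterEquiv {S l : Type*} (L : S → Set l) (σ τ : ℕ → S) : Prop :=
  nsTrace (fun i => some (L (σ i))) = nsTrace (fun i => some (L (τ i)))

/-!
Whenever the stubborn set `r s` misses an enabled action `b`, some invisible action is enabled in
`s`: either `b` itself, or the key action given by D2w, because a visible one would by V force `b`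
into `r s`. Condition I then supplies an invisible key action `a ∈ r s`. It is still enabled at the
end of the run, and D1' moves it to the front, producing a second run joined to the first by an
`a`-transition at every position. Since `a` is invisible, the two runs carry the same labels, so
the new path has the label sequence of the old one with its first entry repeated.
-/

section Stuttering

variable {β : Type*}

theorem subseq_comp_of_strictMono (g : ℕ → Option β) {P : ℕ → Prop} {f : ℕ → ℕ}
    (hf : StrictMono f) (hP : ∀ k, P k → k ∈ Set.range f) :
    subseq (g ∘ f) (P ∘ f) = subseq g P := by
  have himage : {k | P k} = f '' {j | (P ∘ f) j} :=
    (Set.image_preimage_eq_of_subset (s := {k | P k}) hP).symm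
  have hinf : {j | (P ∘ f) j}.Infinite ↔ {k | P k}.Infinite := by
    rw [himage, Set.infinite_image_iff hf.injective.injOn]
  have hcard : {j | (P ∘ f) j}.ncard = {k | P k}.ncard := by
    rw [himage, Set.ncard_image_of_injective _ hf.injective]
  funext k
  simp only [subseq, hinf, hcard]
  refine if_ctx_congr Iff.rfl (fun hk => ?_) fun _ => rfl
  refine congrArg g (Nat.nth_comp_of_strictMono hf hP fun hfin => ?_)
  rw [← Set.ncard_eq_toFinset_card _ hfin]
  exact hk.resolve_left fun hinfinite => hinfinite hfin

theorem exists_galoisConnection_of_monotone {γ : Type*} [Preorder γ] {φ : ℕ → γ}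
    (hφ : Monotone φ) (hcofinal : ∀ j, ∃ i, j ≤ φ i) : ∃ f : γ → ℕ, GaloisConnection f φ := by
  refine ⟨fun j => Nat.find (hcofinal j), fun j i => ?_⟩
  rw [Nat.find_le_iff]
  exact ⟨fun ⟨_, hmi, hjm⟩ => hjm.trans (hφ hmi), fun hji => ⟨i, le_rfl, hji⟩⟩

theorem nsTrace_comp_of_monotone_of_surjective (g : ℕ → Option β) {φ : ℕ → ℕ} (hφ : Monotone φ)
    (hsurj : Function.Surjective φ) : nsTrace (g ∘ φ) = nsTrace g := by
  -- The left adjoint of `φ` enumerates the first indices of the blocks on which `φ` is constant.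
  obtain ⟨f, gc⟩ :=
    exists_galoisConnection_of_monotone hφ fun j => (hsurj j).imp fun _ hi => hi.ge
  have hφf : Function.LeftInverse φ f := fun j => by
    obtain ⟨i, rfl⟩ := hsurj j
    exact gc.u_l_u_eq_u i
  have hf : StrictMono f := gc.monotone_l.strictMono_of_injective hφf.injective
  have hf0 : f 0 = 0 := gc.l_bot
  have hf_eq_zero (j : ℕ) : f j = 0 ↔ j = 0 := by
    simpa only [hf0] using hf.injective.eq_iff (a := j) (b := 0)
  have hfsub (j : ℕ) (hj : j ≠ 0) : φ (f j - 1) = j - 1 := by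
    have hlt : f (j - 1) < f j := hf (by omega)
    have hlower : j - 1 ≤ φ (f j - 1) := gc.le_u (by omega)
    have hupper : φ (f j - 1) < j := gc.lt_iff_lt.mp (by omega)
    omega
  unfold nsTrace
  rw [← subseq_comp_of_strictMono (g ∘ φ) hf]
  · have hchange (j : ℕ) : f j = 0 ∨ g j ≠ g (φ (f j - 1)) ↔ j = 0 ∨ g j ≠ g (j - 1) := by
      rcases eq_or_ne j 0 with rfl | hj
      · simp only [hf0, true_or]
      · rw [hfsub j hj, hf_eq_zero]
    congr 1
    · funext j
      exact congrArg g (hφf j)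
    · funext j
      simp only [Function.comp_apply, hφf j, hchange]
  · rintro k ⟨-, hk⟩
    by_contra hrange
    have hlt : f (φ k) < k := (gc.l_u_le k).lt_of_ne fun h => hrange ⟨_, h⟩
    have hconst : φ (k - 1) = φ k :=
      (hφ (Nat.sub_le k 1)).antisymm (gc.le_u (by omega))
    rcases hk with rfl | hne
    · exact absurd hlt (Nat.not_lt_zero _)
    · exact hne (congrArg g hconst.symm)

end Stuttering

theorem finStutterEquiv_cons {S l : Type*} {L : S → Set l} {n : ℕ} {σ σ' : ℕ → S}
    (hlabel : ∀ i ≤ n, L (σ i) = L (σ' i)) :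
    FinStutterEquiv L n σ (n + 1) (fun i => if i = 0 then σ 0 else σ' (i - 1)) := by
  have hrepeat : finLabelSeq L (n + 1) (fun i => if i = 0 then σ 0 else σ' (i - 1)) =
      finLabelSeq L n σ ∘ Nat.pred := by
    funext i
    rcases i with _ | i
    · simp [finLabelSeq]
    · by_cases hi : i ≤ n
      · simp [finLabelSeq, hi, hlabel i hi]
      · simp [finLabelSeq, hi]
  rw [FinStutterEquiv, hrepeat,
    nsTrace_comp_of_monotone_of_surjective _ (fun _ _ => Nat.pred_le_pred) fun j => ⟨j + 1, rfl⟩]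

section StubbornSets

variable {S A : Type*} {Tr : S → A → S → Prop} {I : Set A} {r : S → Set A}

theorem KeyAction.enabled {s : S} {a : A} (hkey : KeyAction Tr r s a) : ∃ t, Tr s a t :=
  hkey 0 (fun _ => s) (fun _ => a) rfl (fun _ hi => absurd hi (Nat.not_lt_zero _))
    fun _ hi => absurd hi (Nat.not_lt_zero _)

theorem exists_invisible_enabled {s t : S} {b : A} (hD2w : CondD2w Tr r s) (hV : CondV Tr I r s)
    (hb : Tr s b t) (hbr : b ∉ r s) : ∃ a ∈ I, ∃ u, Tr s a u := by
  by_cases hbI : b ∈ I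
  · exact ⟨b, hbI, t, hb⟩
  · obtain ⟨a, har, hkey⟩ := hD2w ⟨b, t, hb⟩
    have haI : a ∈ I := by_contra fun hvisible => hbr (hV ⟨a, har, hvisible, hkey.enabled⟩ b hbI)
    exact ⟨a, haI, hkey.enabled⟩

theorem CondD1'.exists_parallel_run {n : ℕ} {σ : ℕ → S} {α : ℕ → A} {a : A}
    (hD1 : CondD1' Tr I r (σ 0)) (har : a ∈ r (σ 0)) (haI : a ∈ I)
    (hkey : KeyAction Tr r (σ 0) a) (hrun : FinRun Tr n σ α) (hnr : ∀ i < n, α i ∉ r (σ 0)) :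
    ∃ σ' : ℕ → S, FinRun Tr n σ' α ∧ ∀ i ≤ n, Tr (σ i) a (σ' i) := by
  obtain ⟨t, hlast⟩ := hkey n σ α rfl hrun hnr
  obtain ⟨σ', hfirst, hrun', rfl, hmiddle⟩ := hD1 a har n σ α t rfl hrun hnr hlast
  refine ⟨σ', hrun', fun i hi => ?_⟩
  rcases i.eq_zero_or_pos with rfl | hpos
  · exact hfirst
  · rcases hi.eq_or_lt with rfl | hlt
    · exact hlast
    · exact hmiddle haI i hpos hlt

end StubbornSets

theorem introduce_key_action_finite_general {S A l : Type*} {Tr : S → A → S → Prop} (s0 : S)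
    {L : S → Set l} {I : Set A} (hI : InvisibleSet Tr L I) {r : S → Set A} {n : ℕ} (hn : 0 < n)
    {σ : ℕ → S} {α : ℕ → A} (hD1 : CondD1' Tr I r (σ 0)) (hD2w : CondD2w Tr r (σ 0))
    (hV : CondV Tr I r (σ 0)) (hCondI : CondI Tr I r (σ 0))
    (hrun : FinRun Tr n σ α) (hnr : ∀ i < n, α i ∉ r (σ 0)) :
    ∃ (ak : A) (σ' : ℕ → S),
      Tr (σ n) ak (σ' n) ∧ Tr (σ 0) ak (σ' 0) ∧ FinRun Tr n σ' α ∧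
      (RedReach Tr r s0 (σ 0) → RedTr Tr r s0 (σ 0) ak (σ' 0)) ∧
      FinStutterEquiv L n σ (n + 1) (fun i => if i = 0 then σ 0 else σ' (i - 1)) := by
  obtain ⟨a, har, haI, hkey⟩ :=
    hCondI (exists_invisible_enabled hD2w hV (hrun 0 hn) (hnr 0 hn))
  obtain ⟨σ', hrun', hstep⟩ := hD1.exists_parallel_run har haI hkey hrun hnr
  have hfirst : Tr (σ 0) a (σ' 0) := hstep 0 n.zero_le
  exact ⟨a, σ', hstep n le_rfl, hfirst, hrun', fun hreach => ⟨hreach, har, hfirst⟩,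
    finStutterEquiv_cons fun i hi => hI a haI _ _ (hstep i hi)⟩

/-- Lemma "introduce key action", finite case: Let `r` be a weak stubborn
set (satisfying D1', D2w, V, I, L) on an LSTS and let `π = σ 0 -α 0→ σ 1 -α 1→ … σ n` be
a finite path of length `n > 0` such that `α i ∉ r (σ 0)` for every `i < n`.  Then there
exist an action `ak`, a state `σ' n` with `σ n -ak→ σ' n`, and a path
`π' = σ 0 -ak→ σ' 0 -α 0→ … -α (n-1)→ σ' n`, such that `π` and `π'` are stutter
equivalent (and the first transition of `π'` is in the reduced LSTS when `σ 0` is a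
state of the reduced LSTS). -/
theorem introduce_key_action_finite {S A l : Type*} (Tr : S → A → S → Prop) (s0 : S)
    (L : S → Set l) (I : Set A) (hI : InvisibleSet Tr L I) (r : S → Set A)
    (hstub : ∀ s, CondD1' Tr I r s ∧ CondD2w Tr r s ∧ CondV Tr I r s ∧ CondI Tr I r s)
    (hcondL : CondL Tr I r s0)
    (n : ℕ) (hn : 0 < n) (σ : ℕ → S) (α : ℕ → A)
    (hrun : FinRun Tr n σ α) (hnr : ∀ i < n, α i ∉ r (σ 0)) :
    ∃ (ak : A) (σ' : ℕ → S),
      Tr (σ n) ak (σ' n) ∧ Tr (σ 0) ak (σ' 0) ∧ FinRun Tr n σ' α ∧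
      (RedReach Tr r s0 (σ 0) → RedTr Tr r s0 (σ 0) ak (σ' 0)) ∧
      FinStutterEquiv L n σ (n + 1) (fun i => if i = 0 then σ 0 else σ' (i - 1)) := by
  obtain ⟨hD1, hD2w, hV, hCondI⟩ := hstub (σ 0)
  exact introduce_key_action_finite_general s0 hI hn hD1 hD2w hV hCondI hrun hnr
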